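/- Let S, T ⊆ 𝔽₂ⁿ be sets with |S| = |T| = k and dim(S) = dim(T) = k − 3 (so dim E(S) = dim E(T) = 2). Fix bases X₁, X₂ of E(S) and Y₁, Y₂ of E(T). Then S and T are affinely equivalent if and only if the multiset of cardinalities {|v_X(a)| : a ∈ 𝔽₂²} equals the multiset {|v_Y(a)| : a ∈ 𝔽₂²} and moreover |v_X(0)| = |v_Y(0)| (S and T have the same number of isolated points). -/

import Mathlib

open scoped symmDiff

/-!
Label each `x ∈ S` by the vector `ℓ(x) ∈ 𝔽₂^r` recording which of the `X i` contain `x`, so that the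
Venn regions are the fibres of `ℓ`. For a basis `X` of `E(S)`, the indicator functions of the
members of `E(S)` are exactly the functions `x ↦ b ⬝ ℓ(x)` with `b ∈ 𝔽₂^r`, each for a unique `b`
(`isEvenZero_iff`, `label_separates`).

*Equivalent sets have the same region sizes.* An affine automorphism restricts to a bijection
`φ : S ≃ T` that matches `E(S)` with `E(T)`. The indicator of each `X i` is therefore a functional
of `ℓ_Y ∘ φ`, so `ℓ_X = M ℓ_Y ∘ φ` for a matrix `M`, which is invertible because `X` is independent.
Hence `φ` permutes the Venn regions along the linear bijection `M`, which fixes `0`.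

*Equal region sizes give equivalence.* The sizes are matched by a permutation `σ` of `𝔽₂²` which can
be taken to fix `0`, and every such permutation is additive, as `GL₂(𝔽₂) = S₃`. Choosing bijections
region by region gives `φ : S ≃ T` with `ℓ_Y ∘ φ = σ ∘ ℓ_X`, and linearity of `σ` shows that `φ`
matches `E(S)` with `E(T)`. A bijection with this property extends to an affine automorphism
(`exists_affine_of_isEvenZero_iff`): the maps `w ↦ ∑ w(x) x` and `w ↦ ∑ w(x) φ(x)` on even weights
have the same kernel, hence differ by a linear automorphism of `𝔽₂ⁿ`.
-/

/-- `zSet X a` is the symmetric difference of the sets `X i` over the indices `i` with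
`a i = 1` (with `zSet X 0 = ∅`). -/
def zSet {α : Type*} [DecidableEq α] {r : ℕ} (X : Fin r → Finset α)
    (a : Fin r → ZMod 2) : Finset α :=
  (Finset.univ.filter (fun i => a i = 1)).fold (· ∆ ·) ∅ X

/-- The Venn region of `S` with respect to `X₁, …, X_r` determined by `a ∈ 𝔽₂^r`. -/
def vennRegion {α : Type*} [DecidableEq α] {r : ℕ} (S : Finset α)
    (X : Fin r → Finset α) (a : Fin r → ZMod 2) : Finset α :=
  S.filter (fun x => ∀ i, x ∈ X i ↔ a i = 1)

/-- `E(S)`: the collection of all even zero-sum subsets of `S ⊆ 𝔽₂ⁿ`. -/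
def evenZeroSums {n : ℕ} (S : Finset (Fin n → ZMod 2)) :
    Set (Finset (Fin n → ZMod 2)) :=
  {X | X ⊆ S ∧ Even X.card ∧ (∑ x ∈ X, x) = 0}

/-- The dimension of a subset `S ⊆ 𝔽₂ⁿ`: the dimension of its affine span. -/
noncomputable def affDim {n : ℕ} (S : Finset (Fin n → ZMod 2)) : ℕ :=
  Module.finrank (ZMod 2) (affineSpan (ZMod 2) (S : Set (Fin n → ZMod 2))).direction

/-! ### Labels and Venn regions -/

/-- The vector in `𝔽₂^r` recording which of the sets `X i` contain `x`. -/
def regionLabel {α : Type*} [DecidableEq α] {r : ℕ} (X : Fin r → Finset α) (x : α) :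
    Fin r → ZMod 2 :=
  fun i => if x ∈ X i then 1 else 0

/-- The weight `w` on the family `p` of points is the indicator of an even zero-sum family: its
total weight is zero in `𝔽₂` and so is its weighted sum of points. -/
def IsEvenZero {ι : Type*} [Fintype ι] {n : ℕ} (p : ι → Fin n → ZMod 2) (w : ι → ZMod 2) : Prop :=
  ∑ i, w i = 0 ∧ ∑ i, w i • p i = 0

/-- `X` is a basis of `E(S)`. -/
def IsEvenBasis {n r : ℕ} (S : Finset (Fin n → ZMod 2))
    (X : Fin r → Finset (Fin n → ZMod 2)) : Prop :=
  Set.range (zSet X) = evenZeroSums S ∧ Function.Injective (zSet X)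

lemma zmod_two_cases (a : ZMod 2) : a = 0 ∨ a = 1 := by
  revert a; decide

lemma zmod_two_ext {a b : ZMod 2} (h : a = 1 ↔ b = 1) : a = b := by
  revert a b; decide

lemma mem_fold_symmDiff {α : Type*} [DecidableEq α] {r : ℕ} (X : Fin r → Finset α) (x : α)
    (s : Finset (Fin r)) :
    x ∈ s.fold (fun A B : Finset α => A ∆ B) ∅ X ↔ ∑ i ∈ s, regionLabel X x i = 1 := by
  induction s using Finset.induction_on with
  | empty => simp
  | insert i s hi ih =>
    rw [Finset.fold_insert hi, Finset.sum_insert hi, Finset.mem_symmDiff, ih]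
    have key : ∀ t : ZMod 2, (1 + t = 1 ↔ ¬ t = 1) := by decide
    by_cases hx : x ∈ X i <;> simp [regionLabel, hx, key]

lemma mem_zSet {α : Type*} [DecidableEq α] {r : ℕ} (X : Fin r → Finset α) (b : Fin r → ZMod 2)
    (x : α) : x ∈ zSet X b ↔ b ⬝ᵥ regionLabel X x = 1 := by
  rw [zSet, mem_fold_symmDiff, Finset.sum_filter, dotProduct]
  suffices h : ∀ i, (if b i = 1 then regionLabel X x i else 0) = b i * regionLabel X x i by
    simp [h]
  intro i
  rcases zmod_two_cases (b i) with h | h <;> simp [h]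

lemma mem_vennRegion {α : Type*} [DecidableEq α] {r : ℕ} (S : Finset α) (X : Fin r → Finset α)
    (a : Fin r → ZMod 2) (x : α) :
    x ∈ vennRegion S X a ↔ x ∈ S ∧ regionLabel X x = a := by
  rw [vennRegion, Finset.mem_filter, funext_iff]
  refine and_congr_right fun _ => forall_congr' fun i => ?_
  rcases zmod_two_cases (a i) with h | h <;> simp [h, regionLabel]

lemma card_vennRegion {α : Type*} [DecidableEq α] {r : ℕ} (S : Finset α) (X : Fin r → Finset α)
    (a : Fin r → ZMod 2) :
    (vennRegion S X a).card = Fintype.card {x : S // regionLabel X x.1 = a} := by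
  rw [← Fintype.card_coe]
  refine Fintype.card_congr ⟨fun x => ⟨⟨x.1, ((mem_vennRegion S X a x.1).1 x.2).1⟩,
      ((mem_vennRegion S X a x.1).1 x.2).2⟩,
    fun x => ⟨x.1.1, (mem_vennRegion S X a _).2 ⟨x.1.2, x.2⟩⟩, fun _ => rfl, fun _ => rfl⟩

/-! ### Members of `E(S)` as functionals of the label -/

lemma zSet_mem_evenZeroSums {n r : ℕ} {S : Finset (Fin n → ZMod 2)}
    {X : Fin r → Finset (Fin n → ZMod 2)} (hX : IsEvenBasis S X) (b : Fin r → ZMod 2) : zSet X b ∈ evenZeroSums S :=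
  hX.1 ▸ Set.mem_range_self b

lemma label_separates {n r : ℕ} {S : Finset (Fin n → ZMod 2)}
    {X : Fin r → Finset (Fin n → ZMod 2)} (hX : IsEvenBasis S X) {b c : Fin r → ZMod 2}
    (h : ∀ x : S, b ⬝ᵥ regionLabel X x.1 = c ⬝ᵥ regionLabel X x.1) : b = c := by
  apply hX.2
  ext x
  by_cases hx : x ∈ S
  · rw [mem_zSet, mem_zSet, h ⟨x, hx⟩]
  · exact iff_of_false (fun h' => hx ((zSet_mem_evenZeroSums hX b).1 h'))
      (fun h' => hx ((zSet_mem_evenZeroSums hX c).1 h'))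

/-- Translation between weights on `S` and subsets of `S`. -/
lemma isEvenZero_iff_mem {n : ℕ} {S U : Finset (Fin n → ZMod 2)} (hU : U ⊆ S)
    {w : S → ZMod 2} (hw : ∀ x : S, x.1 ∈ U ↔ w x = 1) :
    IsEvenZero (fun x : S => x.1) w ↔ U ∈ evenZeroSums S := by
  have hw' : ∀ x : S, w x = if x.1 ∈ U then 1 else 0 := by
    intro x
    rcases zmod_two_cases (w x) with h | h <;> simp [hw, h]
  have h1 : ∑ x : S, w x = (U.card : ZMod 2) := by
    simp_rw [hw']
    rw [Finset.sum_coe_sort S (fun x => if x ∈ U then (1 : ZMod 2) else 0), ← Finset.sum_filter,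
      Finset.filter_mem_eq_inter, Finset.inter_eq_right.2 hU]
    simp
  have h2 : ∑ x : S, w x • x.1 = ∑ x ∈ U, x := by
    simp_rw [hw', ite_smul, one_smul, zero_smul]
    rw [Finset.sum_coe_sort S (fun x => if x ∈ U then x else 0), ← Finset.sum_filter,
      Finset.filter_mem_eq_inter, Finset.inter_eq_right.2 hU]
  simp only [IsEvenZero, evenZeroSums, Set.mem_ofPred_eq, h1, h2, hU, true_and,
    ZMod.natCast_eq_zero_iff_even]

/-- If `X` is a basis of `E(S)`, the indicators of members of `E(S)` are the functionals of the
label. -/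
lemma isEvenZero_iff {n r : ℕ} {S : Finset (Fin n → ZMod 2)}
    {X : Fin r → Finset (Fin n → ZMod 2)} (hX : IsEvenBasis S X) (w : S → ZMod 2) :
    IsEvenZero (fun x : S => x.1) w ↔
      ∃ b : Fin r → ZMod 2, ∀ x : S, w x = b ⬝ᵥ regionLabel X x.1 := by
  constructor
  · intro h
    let U : Finset (Fin n → ZMod 2) := (Finset.univ.filter (fun x : S => w x = 1)).image (·.1)
    have hmem : ∀ x : S, x.1 ∈ U ↔ w x = 1 := by
      intro x
      simp [U]
    have hU : U ⊆ S := by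
      intro x hx
      obtain ⟨y, -, rfl⟩ := Finset.mem_image.1 hx
      exact y.2
    have hE := (isEvenZero_iff_mem hU hmem).1 h
    rw [← hX.1] at hE
    obtain ⟨b, hb⟩ := hE
    refine ⟨b, fun x => zmod_two_ext ?_⟩
    rw [← hmem, ← mem_zSet, hb]
  · rintro ⟨b, hb⟩
    refine (isEvenZero_iff_mem (zSet_mem_evenZeroSums hX b).1 fun x => ?_).2
      (zSet_mem_evenZeroSums hX b)
    rw [mem_zSet, hb]

/-- The same description of `E(T)`, transported along a bijection with an index type. -/
lemma isEvenZero_comp_iff {ι : Type*} [Fintype ι] {n r : ℕ} {T : Finset (Fin n → ZMod 2)}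
    {Y : Fin r → Finset (Fin n → ZMod 2)} (hY : IsEvenBasis T Y) (e : ι ≃ T) (w : ι → ZMod 2) :
    IsEvenZero (fun i => (e i).1) w ↔
      ∃ b : Fin r → ZMod 2, ∀ i, w i = b ⬝ᵥ regionLabel Y (e i).1 := by
  have h := isEvenZero_iff hY (w ∘ e.symm)
  rw [IsEvenZero, ← e.sum_comp, ← e.sum_comp] at h
  simp only [Function.comp_apply, Equiv.symm_apply_apply] at h
  rw [IsEvenZero, h]
  refine exists_congr fun b => ⟨fun h i => by simpa using h (e i), fun h x => by
    simpa using h (e.symm x)⟩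

/-! ### Extension to an affine automorphism -/

lemma exists_linearEquiv_of_ker_eq {K M V : Type*} [Field K] [AddCommGroup M] [Module K M]
    [AddCommGroup V] [Module K V] [FiniteDimensional K V] (f g : M →ₗ[K] V)
    (h : LinearMap.ker f = LinearMap.ker g) : ∃ L : V ≃ₗ[K] V, ∀ m, L (f m) = g m := by
  obtain ⟨L, hL⟩ := Submodule.exists_linearEquiv_restrict_eq
    (f.quotKerEquivRange.symm ≪≫ₗ Submodule.quotEquivOfEq _ _ h ≪≫ₗ g.quotKerEquivRange)
  refine ⟨L, fun m => ?_⟩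
  have := hL (f.quotKerEquivRange (Submodule.Quotient.mk m))
  rw [LinearMap.quotKerEquivRange_apply_mk] at this
  rw [← this, ← LinearMap.quotKerEquivRange_apply_mk]
  simp

/-- Two families of points with the same even zero-sum weights are affinely equivalent. -/
lemma exists_affine_of_isEvenZero_iff {ι : Type*} [Fintype ι] {n : ℕ} (p q : ι → Fin n → ZMod 2)
    (h : ∀ w, IsEvenZero p w ↔ IsEvenZero q w) :
    ∃ (L : (Fin n → ZMod 2) ≃ₗ[ZMod 2] (Fin n → ZMod 2)) (c : Fin n → ZMod 2),
      ∀ i, L (p i) + c = q i := by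
  classical
  rcases isEmpty_or_nonempty ι with _ | ⟨⟨i₀⟩⟩
  · exact ⟨LinearEquiv.refl _ _, 0, fun i => isEmptyElim i⟩
  let M : Submodule (ZMod 2) (ι → ZMod 2) :=
    LinearMap.ker (Fintype.linearCombination (ZMod 2) (fun _ : ι => (1 : ZMod 2)))
  have hM : ∀ w, w ∈ M ↔ ∑ i, w i = 0 := by
    intro w
    simp [M, Fintype.linearCombination_apply]
  let f := (Fintype.linearCombination (ZMod 2) p).comp M.subtype
  let g := (Fintype.linearCombination (ZMod 2) q).comp M.subtype
  have hfg : LinearMap.ker f = LinearMap.ker g := by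
    ext ⟨w, hw⟩
    have := h w
    rw [IsEvenZero, IsEvenZero, ← hM, and_iff_right hw, and_iff_right hw] at this
    simpa [f, g, Fintype.linearCombination_apply] using this
  obtain ⟨L, hL⟩ := exists_linearEquiv_of_ker_eq f g hfg
  refine ⟨L, q i₀ - L (p i₀), fun i => ?_⟩
  have hmem : Pi.single i (1 : ZMod 2) - Pi.single i₀ 1 ∈ M := by
    rw [hM]
    simp
  have := hL ⟨_, hmem⟩
  simp only [f, g, LinearMap.comp_apply, Submodule.subtype_apply, map_sub,
    Fintype.linearCombination_apply_single, one_smul] at this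
  rw [add_sub_left_comm, this]
  abel

/-! ### Matching the Venn regions -/

/-- Since `GL₂(𝔽₂)` is the full symmetric group on the nonzero vectors, permutations fixing `0` are
additive. -/
lemma perm_additive (σ : Equiv.Perm (Fin 2 → ZMod 2)) (h0 : σ 0 = 0) (a b : Fin 2 → ZMod 2) :
    σ (a + b) = σ a + σ b := by
  have two : ∀ u : Fin 2 → ZMod 2, u + u = 0 := by decide
  -- two distinct nonzero vectors determine the third as their sum
  have third : ∀ u v w : Fin 2 → ZMod 2, u ≠ 0 → v ≠ 0 → w ≠ 0 → u ≠ v → u ≠ w → v ≠ w →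
      w = u + v := by decide
  by_cases ha : a = 0
  · simp [ha, h0]
  by_cases hb : b = 0
  · simp [hb, h0]
  by_cases hab : a = b
  · simp [hab, two, h0]
  have ne : ∀ {u v}, u ≠ v → σ u ≠ σ v := fun h => σ.injective.ne h
  have ne0 : ∀ {u}, u ≠ 0 → σ u ≠ 0 := fun {u} h => h0 ▸ ne h
  have hs : a + b ≠ 0 := fun h => hab (by rw [← add_left_inj b, h, two])
  exact third _ _ _ (ne0 ha) (ne0 hb) (ne0 hs) (ne hab) (ne (by simpa using hb))
    (ne (by simpa using ha))

/-- Equal multisets of values of `f` and `g`, with `f x₀ = g x₀`, are matched by a permutation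
fixing `x₀`. -/
lemma exists_perm_of_map_eq {α β : Type*} [Fintype α] [DecidableEq α] [DecidableEq β]
    (f g : α → β) (x₀ : α)
    (h : (Finset.univ : Finset α).val.map f = (Finset.univ : Finset α).val.map g)
    (h0 : f x₀ = g x₀) : ∃ σ : Equiv.Perm α, σ x₀ = x₀ ∧ ∀ a, g (σ a) = f a := by
  have hcard : ∀ c, Nonempty ({a // f a = c} ≃ {a // g a = c}) := by
    intro c
    refine Fintype.card_eq.1 ?_
    have := congrArg (Multiset.count c) h
    simp only [Multiset.count_map, eq_comm (a := c)] at this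
    rw [Fintype.card_subtype, Fintype.card_subtype]
    exact this
  let τ : Equiv.Perm α := Equiv.ofFiberEquiv fun c => (hcard c).some
  have hτ : ∀ a, g (τ a) = f a := Equiv.ofFiberEquiv_map _
  refine ⟨τ.trans (Equiv.swap x₀ (τ x₀)), by simp, fun a => ?_⟩
  rw [Equiv.trans_apply, ← hτ]
  -- the swapped points have equal values under `g`
  have hx : g (τ x₀) = g x₀ := (hτ x₀).trans h0
  rw [Equiv.swap_apply_def]
  split_ifs with h1 h2
  · rw [hx, h1]
  · rw [h2, hx]
  · rfl

/-- A bijection `S ≃ T` matching `E(S)` with `E(T)` permutes the Venn regions along a linear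
bijection of label space. -/
lemma exists_linear_matching {n r : ℕ} {S T : Finset (Fin n → ZMod 2)}
    {X Y : Fin r → Finset (Fin n → ZMod 2)} (hX : IsEvenBasis S X) (hY : IsEvenBasis T Y)
    (e : S ≃ T)
    (he : ∀ w, IsEvenZero (fun x : S => x.1) w ↔ IsEvenZero (fun x : S => (e x).1) w) :
    ∃ M : Matrix (Fin r) (Fin r) (ZMod 2), Function.Bijective M.mulVec ∧
      ∀ x : S, regionLabel X x.1 = M.mulVec (regionLabel Y (e x).1) := by
  have hrow : ∀ i, ∃ m : Fin r → ZMod 2, ∀ x : S,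
      regionLabel X x.1 i = m ⬝ᵥ regionLabel Y (e x).1 := fun i =>
    (isEvenZero_comp_iff hY e _).1 ((he _).1 ((isEvenZero_iff hX _).2
      ⟨Pi.single i 1, fun x => by simp⟩))
  choose m hm using hrow
  have hlab : ∀ x : S, regionLabel X x.1 = (Matrix.of m).mulVec (regionLabel Y (e x).1) :=
    fun x => funext fun i => hm i x
  have hinj : Function.Injective (Matrix.of m).vecMul := by
    intro b c hbc
    refine label_separates hX fun x => ?_
    rw [hlab, Matrix.dotProduct_mulVec, Matrix.dotProduct_mulVec]
    exact congrArg (· ⬝ᵥ _) hbc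
  have hunit := Matrix.vecMul_injective_iff_isUnit.1 hinj
  exact ⟨_, ⟨Matrix.mulVec_injective_of_isUnit hunit,
    Matrix.mulVec_surjective_iff_isUnit.2 hunit⟩, hlab⟩

/-- Let `S, T ⊆ 𝔽₂ⁿ` with `|S| = |T| = k` and `dim S = dim T = k − 3`, and fix bases
`X₁, X₂` of `E(S)` and `Y₁, Y₂` of `E(T)`.  Then `S` and `T` are affinely equivalent if
and only if the multiset of Venn region cardinalities `{|v_X(a)| : a ∈ 𝔽₂²}` equals the
multiset `{|v_Y(a)| : a ∈ 𝔽₂²}` and moreover `|v_X(0)| = |v_Y(0)|` (`S` and `T` have the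
same number of isolated points). -/
theorem stmt_17 (n k : ℕ) (S T : Finset (Fin n → ZMod 2))
    (hSk : S.card = k) (hTk : T.card = k)
    (hSd : affDim S = k - 3) (hTd : affDim T = k - 3)
    (X Y : Fin 2 → Finset (Fin n → ZMod 2))
    (hX : Set.range (zSet X) = evenZeroSums S ∧ Function.Injective (zSet X))
    (hY : Set.range (zSet Y) = evenZeroSums T ∧ Function.Injective (zSet Y)) :
    (∃ (L : (Fin n → ZMod 2) ≃ₗ[ZMod 2] (Fin n → ZMod 2)) (c : Fin n → ZMod 2),
        S.image (fun x => L x + c) = T) ↔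
      ((Finset.univ : Finset (Fin 2 → ZMod 2)).val.map
          (fun a => (vennRegion S X a).card) =
        (Finset.univ : Finset (Fin 2 → ZMod 2)).val.map
          (fun a => (vennRegion T Y a).card)) ∧
      (vennRegion S X 0).card = (vennRegion T Y 0).card := by
  have hX' : IsEvenBasis S X := hX
  have hY' : IsEvenBasis T Y := hY
  constructor
  · rintro ⟨L, c, rfl⟩
    have hinj : Function.Injective fun x => L x + c := fun x y h =>
      L.injective (add_right_cancel h)
    let e : S ≃ S.image (fun x => L x + c) :=
      Equiv.ofBijective (fun x => ⟨L x.1 + c, Finset.mem_image_of_mem _ x.2⟩)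
        ⟨fun x y h => Subtype.ext (hinj (congrArg Subtype.val h)), fun y => by
          obtain ⟨x, hx, hxy⟩ := Finset.mem_image.1 y.2
          exact ⟨⟨x, hx⟩, Subtype.ext hxy⟩⟩
    have he : ∀ w, IsEvenZero (fun x : S => x.1) w ↔ IsEvenZero (fun x : S => (e x).1) w := by
      intro w
      refine and_congr_right fun hw => ?_
      -- the translation part contributes `(∑ w) • c = 0`
      have : ∑ x : S, w x • (L x.1 + c) = L (∑ x : S, w x • x.1) := by
        simp only [smul_add, Finset.sum_add_distrib, ← Finset.sum_smul, hw, map_sum, map_smul,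
          zero_smul, add_zero]
      change _ ↔ ∑ x : S, w x • (L x.1 + c) = 0
      rw [this, LinearEquiv.map_eq_zero_iff]
    obtain ⟨M, hM, hlab⟩ := exists_linear_matching hX' hY' e he
    have hcard : ∀ a, (vennRegion S X (M.mulVec a)).card =
        (vennRegion (S.image fun x => L x + c) Y a).card := by
      intro a
      rw [card_vennRegion, card_vennRegion]
      refine Fintype.card_congr (e.subtypeEquiv fun x => ?_)
      rw [hlab, hM.1.eq_iff]
    constructor
    · conv_lhs => rw [← Multiset.map_univ_val_equiv (Equiv.ofBijective _ hM), Multiset.map_map]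
      exact Multiset.map_congr rfl fun a _ => hcard a
    · rw [← hcard 0, Matrix.mulVec_zero]
  · rintro ⟨hmul, h0⟩
    obtain ⟨σ, hσ0, hσ⟩ := exists_perm_of_map_eq _ _ 0 hmul h0
    have hadd := perm_additive σ hσ0
    -- additive maps over `𝔽₂` are linear
    let σL : (Fin 2 → ZMod 2) →ₗ[ZMod 2] (Fin 2 → ZMod 2) :=
      (AddMonoidHom.mk' σ hadd).toZModLinearMap 2
    have hfib : ∀ c, Nonempty ({x : S // σ (regionLabel X x.1) = c} ≃
        {y : T // regionLabel Y y.1 = c}) := by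
      intro c
      refine Fintype.card_eq.1 ?_
      obtain ⟨a, rfl⟩ := σ.surjective c
      have := hσ a
      rw [card_vennRegion, card_vennRegion] at this
      simpa only [σ.injective.eq_iff] using this.symm
    let e : S ≃ T := Equiv.ofFiberEquiv fun c => (hfib c).some
    have he : ∀ x : S, regionLabel Y (e x).1 = σ (regionLabel X x.1) :=
      Equiv.ofFiberEquiv_map fun c => (hfib c).some
    have hM : ∀ u, σ u = (LinearMap.toMatrix' σL).mulVec u := fun u =>
      (LinearMap.toMatrix'_mulVec σL u).symm
    have hunit : IsUnit (LinearMap.toMatrix' σL) :=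
      Matrix.mulVec_surjective_iff_isUnit.1 fun u => by
        obtain ⟨v, rfl⟩ := σ.surjective u
        exact ⟨v, (hM v).symm⟩
    have hvec := Matrix.vecMul_surjective_iff_isUnit.2 hunit
    have hE : ∀ w, IsEvenZero (fun x : S => x.1) w ↔ IsEvenZero (fun x : S => (e x).1) w := by
      intro w
      rw [isEvenZero_iff hX', isEvenZero_comp_iff hY']
      simp only [he, hM, Matrix.dotProduct_mulVec]
      constructor
      · rintro ⟨b, hb⟩
        obtain ⟨b', rfl⟩ := hvec b
        exact ⟨b', hb⟩
      · rintro ⟨b, hb⟩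
        exact ⟨_, hb⟩
    obtain ⟨L, c, hLc⟩ := exists_affine_of_isEvenZero_iff _ _ hE
    refine ⟨L, c, Finset.ext fun y => ?_⟩
    rw [Finset.mem_image]
    constructor
    · rintro ⟨x, hx, rfl⟩
      rw [hLc ⟨x, hx⟩]
      exact (e _).2
    · intro hy
      refine ⟨(e.symm ⟨y, hy⟩).1, (e.symm ⟨y, hy⟩).2, ?_⟩
      rw [hLc, Equiv.apply_symm_apply]
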